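/- arXiv:2512.24920 — 2 statements merged into one kernel-verified Lean document; each statement's English description precedes it below -/
import Mathlib

section
/- Let R be a ring, a, b, w ∈ R with w central, F = a² + w·b, C = b·a − a·b, S_k = ∑_{i=0}^{k-1} F^i·C·F^{k-1-i}. Let τ : R → M be additive with τ(x·y) = τ(y·x). Then for all k ≥ 1, for any element e ∈ R: τ(e·a·F^k) = τ(e·F^k·a) − τ(w·e·S_k). -/
/-!
With `F = a² + w b`, commutation with `a` annihilates `a²` and passes through `w`, so
`F a - a F = w (b a - a b)`. The passage to `F ^ k` is a telescoping sum whose `i`-th term moves `a`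
past one factor `F`.
-/

section Bianchi

variable {R : Type*} [Ring R]

theorem pow_mul_sub_mul_pow (x y a : R) (k : ℕ) :
    x ^ k * a - a * y ^ k =
      ∑ i ∈ Finset.range k, x ^ i * (x * a - a * y) * y ^ (k - 1 - i) := by
  calc x ^ k * a - a * y ^ k
      = ∑ i ∈ Finset.range k,
          (x ^ (i + 1) * a * y ^ (k - (i + 1)) - x ^ i * a * y ^ (k - i)) := by
        rw [Finset.sum_range_sub (fun i ↦ x ^ i * a * y ^ (k - i))]
        simp only [Nat.sub_self, Nat.sub_zero, pow_zero, mul_one, one_mul]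
    _ = ∑ i ∈ Finset.range k, x ^ i * (x * a - a * y) * y ^ (k - 1 - i) := by
        refine Finset.sum_congr rfl fun i hi ↦ ?_
        have hik : i < k := Finset.mem_range.mp hi
        rw [show k - (i + 1) = k - 1 - i by lia, show k - i = k - 1 - i + 1 by lia,
          pow_succ x, pow_succ' y]
        simp only [mul_sub, sub_mul, mul_assoc]

variable {a b w : R}

theorem bianchi_identity (b : R) (hwa : Commute w a) :
    (a ^ 2 + w * b) * a - a * (a ^ 2 + w * b) = w * (b * a - a * b) := by
  rw [add_mul, mul_add, hwa.symm.left_comm b, ← pow_succ, ← pow_succ', add_sub_add_left_eq_sub,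
    mul_assoc, mul_sub]

theorem bianchi_identity_pow (hwa : Commute w a) (hwb : Commute w b) (k : ℕ) :
    (a ^ 2 + w * b) ^ k * a - a * (a ^ 2 + w * b) ^ k =
      w * ∑ i ∈ Finset.range k,
        (a ^ 2 + w * b) ^ i * (b * a - a * b) * (a ^ 2 + w * b) ^ (k - 1 - i) := by
  have hwF : Commute w (a ^ 2 + w * b) :=
    (hwa.pow_right 2).add_right ((Commute.refl w).mul_right hwb)
  rw [pow_mul_sub_mul_pow, bianchi_identity b hwa, Finset.mul_sum]
  refine Finset.sum_congr rfl fun i _ ↦ ?_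
  rw [(hwF.pow_right i).symm.left_comm, mul_assoc w]

end Bianchi

theorem trace_transgression_first_component_general {R M : Type*} [Ring R] [AddGroup M]
    (τ : R →+ M) {a b w e : R} (hwa : Commute w a) (hwb : Commute w b) (hwe : Commute w e)
    (k : ℕ) :
    τ (e * a * (a ^ 2 + w * b) ^ k) =
      τ (e * (a ^ 2 + w * b) ^ k * a) -
      τ (w * e * (∑ i ∈ Finset.range k,
        (a ^ 2 + w * b) ^ i * (b * a - a * b) * (a ^ 2 + w * b) ^ (k - 1 - i))) := by
  set F := a ^ 2 + w * b
  set S := ∑ i ∈ Finset.range k, F ^ i * (b * a - a * b) * F ^ (k - 1 - i)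
  have contracted_bianchi : w * e * S = e * F ^ k * a - e * a * F ^ k := by
    calc w * e * S = e * (w * S) := by rw [hwe.eq, mul_assoc]
      _ = e * (F ^ k * a - a * F ^ k) := by rw [bianchi_identity_pow hwa hwb]
      _ = e * F ^ k * a - e * a * F ^ k := by simp only [mul_sub, mul_assoc]
  rw [← map_sub, contracted_bianchi, sub_sub_cancel]

theorem trace_transgression_first_component {R M : Type*} [Ring R] [AddCommGroup M]
    (τ : R →+ M) (hτ : ∀ x y : R, τ (x * y) = τ (y * x))
    (a b w : R) (hw : ∀ r : R, w * r = r * w) :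
    ∀ k : ℕ, 1 ≤ k → ∀ e : R,
      τ (e * a * (a ^ 2 + w * b) ^ k) =
        τ (e * (a ^ 2 + w * b) ^ k * a) -
        τ (w * e * (∑ i ∈ Finset.range k,
          (a ^ 2 + w * b) ^ i * (b * a - a * b) * (a ^ 2 + w * b) ^ (k - 1 - i))) :=
  fun k _ e ↦ trace_transgression_first_component_general τ (hw a) (hw b) (hw e) k
end

section
/- Let R be a ring, a, b, w ∈ R with w central, F = a² + w·b, C = b·a − a·b, and S_k = ∑_{i=0}^{k-1} F^i·C·F^{k-1-i}. Assuming the induction hypotheses a·F^k − F^k·a + w·S_k = 0 and b·F^k − F^k·b − a·S_k − S_k·a = 0, one has S_{k+1} = S_k·F + F^k·C, and the identity a·F^{k+1} − F^{k+1}·a + w·S_{k+1} = 0 follows. -/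
/-!
Bracketing with `a` is a derivation, so `⁅F ^ n, a⁆ = ∑ i < n, F ^ i * ⁅F, a⁆ * F ^ (n - 1 - i)`.
For `F = a ^ 2 + w * b` the square commutes with `a`, leaving `⁅F, a⁆ = w * ⁅b, a⁆`, and the factor
`w` commutes with `F`, so it can be pulled out of the sum.
-/

/-- The directional derivative of `x ↦ x ^ n` at `x` along `c`, in a possibly noncommutative
semiring. With `x = F` and `c = C` it is the sum `S_n` of the primitive Bianchi identity. The
truncated exponent `n - 1 - i` is exact because `i < n`. -/
def powDeriv {R : Type*} [Semiring R] (x c : R) (n : ℕ) : R :=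
  ∑ i ∈ Finset.range n, x ^ i * c * x ^ (n - 1 - i)

section Semiring

variable {R : Type*} [Semiring R]

theorem powDeriv_zero (x c : R) : powDeriv x c 0 = 0 :=
  Finset.sum_range_zero _

theorem powDeriv_succ (x c : R) (n : ℕ) :
    powDeriv x c (n + 1) = powDeriv x c n * x + x ^ n * c := by
  have exponent {i : ℕ} (hi : i < n) : n - i = n - 1 - i + 1 := by omega
  simp only [powDeriv, Nat.add_sub_cancel]
  rw [Finset.sum_range_succ, Nat.sub_self, pow_zero, mul_one, Finset.sum_mul]
  congr 1
  refine Finset.sum_congr rfl fun i hi => ?_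
  rw [exponent (Finset.mem_range.mp hi), pow_succ, ← mul_assoc]

theorem powDeriv_mul_of_commute {w x : R} (h : Commute w x) (c : R) (n : ℕ) :
    powDeriv x (w * c) n = w * powDeriv x c n := by
  simp only [powDeriv, Finset.mul_sum]
  refine Finset.sum_congr rfl fun i _ => ?_
  rw [← mul_assoc, ← (h.pow_right i).eq, mul_assoc w, mul_assoc w]

end Semiring

section Ring

variable {R : Type*} [Ring R]

theorem pow_lie_eq_powDeriv (x y : R) (n : ℕ) : ⁅x ^ n, y⁆ = powDeriv x ⁅x, y⁆ n := by
  induction n with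
  | zero => rw [powDeriv_zero, pow_zero, Ring.lie_def, one_mul, mul_one, sub_self]
  | succ n ih =>
    calc ⁅x ^ (n + 1), y⁆ = ⁅x ^ n, y⁆ * x + x ^ n * ⁅x, y⁆ := by
          simp only [Ring.lie_def, pow_succ]
          noncomm_ring
      _ = powDeriv x ⁅x, y⁆ (n + 1) := by rw [ih, powDeriv_succ]

theorem sq_add_mul_lie {a w : R} (hwa : Commute w a) (b : R) :
    ⁅a ^ 2 + w * b, a⁆ = w * ⁅b, a⁆ := by
  have hab : a * (w * b) = w * (a * b) := hwa.symm.left_comm b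
  rw [Ring.lie_def, Ring.lie_def, mul_add, hab]
  noncomm_ring

theorem sq_add_mul_pow_lie {a b w : R} (hwa : Commute w a) (hwb : Commute w b) (n : ℕ) :
    ⁅(a ^ 2 + w * b) ^ n, a⁆ = w * powDeriv (a ^ 2 + w * b) ⁅b, a⁆ n := by
  have hwF : Commute w (a ^ 2 + w * b) :=
    (hwa.pow_right 2).add_right ((Commute.refl w).mul_right hwb)
  rw [pow_lie_eq_powDeriv, sq_add_mul_lie hwa, powDeriv_mul_of_commute hwF]

theorem primitive_bianchi_inductive_step_general {a b w : R}
    (hwa : Commute w a) (hwb : Commute w b) (k : ℕ) :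
    powDeriv (a ^ 2 + w * b) (b * a - a * b) (k + 1) =
      powDeriv (a ^ 2 + w * b) (b * a - a * b) k * (a ^ 2 + w * b) +
        (a ^ 2 + w * b) ^ k * (b * a - a * b) ∧
    a * (a ^ 2 + w * b) ^ (k + 1) - (a ^ 2 + w * b) ^ (k + 1) * a +
      w * powDeriv (a ^ 2 + w * b) (b * a - a * b) (k + 1) = 0 := by
  refine ⟨powDeriv_succ _ _ k, ?_⟩
  rw [← Ring.lie_def b a, ← sq_add_mul_pow_lie hwa hwb, Ring.lie_def, sub_add_sub_cancel, sub_self]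

end Ring

theorem primitive_bianchi_inductive_step {R : Type*} [Ring R] (a b w : R)
    (hw : ∀ r : R, w * r = r * w) (k : ℕ)
    (IH1 : a * (a ^ 2 + w * b) ^ k - (a ^ 2 + w * b) ^ k * a +
      w * (∑ i ∈ Finset.range k,
        (a ^ 2 + w * b) ^ i * (b * a - a * b) * (a ^ 2 + w * b) ^ (k - 1 - i)) = 0)
    (IH2 : b * (a ^ 2 + w * b) ^ k - (a ^ 2 + w * b) ^ k * b -
      a * (∑ i ∈ Finset.range k,
        (a ^ 2 + w * b) ^ i * (b * a - a * b) * (a ^ 2 + w * b) ^ (k - 1 - i)) -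
      (∑ i ∈ Finset.range k,
        (a ^ 2 + w * b) ^ i * (b * a - a * b) * (a ^ 2 + w * b) ^ (k - 1 - i)) * a = 0) :
    (∑ i ∈ Finset.range (k + 1),
        (a ^ 2 + w * b) ^ i * (b * a - a * b) * (a ^ 2 + w * b) ^ (k - i)) =
      (∑ i ∈ Finset.range k,
        (a ^ 2 + w * b) ^ i * (b * a - a * b) * (a ^ 2 + w * b) ^ (k - 1 - i)) *
        (a ^ 2 + w * b) + (a ^ 2 + w * b) ^ k * (b * a - a * b) ∧
    a * (a ^ 2 + w * b) ^ (k + 1) - (a ^ 2 + w * b) ^ (k + 1) * a +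
      w * (∑ i ∈ Finset.range (k + 1),
        (a ^ 2 + w * b) ^ i * (b * a - a * b) * (a ^ 2 + w * b) ^ (k - i)) = 0 :=
  primitive_bianchi_inductive_step_general (hw a) (hw b) k
end
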